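/- For any integers m ≥ 0, n ≥ 1, any subset S of [m] = {1,2,…,m} with s = |S|, the sum over all complete (m+1)-ary trees T with n internal vertices of the product over all internal vertices v of T of (m − s + 1/ℍ_v^S) equals (m−s+1)^n · (mn+1)^{n−1} / n!. -/

import Mathlib

open Polynomial Finset

/-- A complete `m`-ary tree: a `leaf` is an external vertex and a `node`
has exactly `m` linearly ordered subtrees. -/
inductive MTree (m : ℕ) : Type
  | leaf : MTree m
  | node : (Fin m → MTree m) → MTree m

namespace MTree

/-- The number of internal vertices of a complete `m`-ary tree. -/
def internals {m : ℕ} : MTree m → ℕ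
  | leaf => 0
  | node c => 1 + ∑ i, (c i).internals

/-- The first kind of hook length of the root of `node c`: one plus the number of
internal vertices of all subtrees except the rightmost one. -/
def hook1 {m : ℕ} (c : Fin m → MTree m) : ℕ :=
  1 + ∑ i ∈ Finset.univ.filter (fun i : Fin m => (i : ℕ) + 1 < m), (c i).internals

/-- The product of `f (𝓗_v)` over all internal vertices `v` of a complete `m`-ary
tree, where `𝓗_v` is the first kind of hook length. -/
def hookProd1 {m : ℕ} {R : Type*} [CommSemiring R] (f : ℕ → R) : MTree m → R
  | leaf => 1
  | node c => f (hook1 c) * ∏ i, hookProd1 f (c i)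

/-- The number of internal vertices of the `(m+1-|S|)`-ary tree `T^S` obtained from a
complete `(m+1)`-ary tree `T` by recursively deleting, for every `r ∈ S ⊆ [m]`,
the `r`-th subtree of every remaining internal vertex (the label `r ∈ {1,…,m}`
corresponds to the child with index `r - 1`, i.e. to `Fin.castSucc` of `Fin m`). -/
def internalsS {m : ℕ} (S : Finset (Fin m)) : MTree (m + 1) → ℕ
  | leaf => 0
  | node c => 1 + ∑ i ∈ (S.image Fin.castSucc)ᶜ, internalsS S (c i)

/-- The product of `f (ℍ_v^S)` over all internal vertices `v` of a complete
`(m+1)`-ary tree, where `ℍ_v^S` is the second kind of hook length. -/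
def hookProdS {m : ℕ} {R : Type*} [CommSemiring R] (S : Finset (Fin m)) (f : ℕ → R) :
    MTree (m + 1) → R
  | leaf => 1
  | node c => f (internalsS S (node c)) * ∏ i, hookProdS S f (c i)

end MTree

/-!
Mark the vertices of `T` that survive in `T^S` by `y` and all vertices by `z`. Write `F(y, z)` for
the resulting sum of hook products and let `k = m - s`. Splitting a tree at its root shows that for
`h ≥ 1` the coefficient of `y ^ h` in `F` is `k + 1 / h` times the one in
`y z F(y, z) ^ (k + 1) F(1, z) ^ s`, because a child at a deleted position does not contribute to
`T^S`. This determines `F`.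

The Abel polynomials `A_n(x) = x (x + k n) ^ (n - 1) / n!` of parameter `k` are the coefficients of
`E ^ x`, where `E = exp (u E ^ k)`. Abel's identity says that substituting `u = z G ^ s` into this
series, where `G` is its analogue for the parameter `k + s`, yields `G`. Keeping track of `y` in
this substitution produces an explicit family of series with
`Φ(p, q) Φ(p', q') = Φ(p + p', q + q')`, and `Φ(1, 0)`, with `z` scaled by `k + 1`, satisfies the
recursion for `F`. Put `y = 1`.
-/

noncomputable section

section AbelPolynomial

lemma polynomial_eq_of_derivative_eq {R : Type*} [Ring R] [IsAddTorsionFree R] {p q : R[X]}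
    (hderiv : derivative p = derivative q) (hzero : p.eval 0 = q.eval 0) : p = q := by
  have hconst : p - q = C ((p - q).coeff 0) :=
    eq_C_of_derivative_eq_zero (by rw [derivative_sub, hderiv, sub_self])
  rw [coeff_zero_eq_eval_zero, eval_sub, sub_eq_zero.2 hzero, C_0] at hconst
  exact sub_eq_zero.1 hconst

variable {K : Type*} [Field K]

/-- The Abel polynomial `X (X + k n) ^ (n - 1) / n!`, normalised so that its values at `x` are the
coefficients of the `x`-th power of the solution `E` of `E = exp (u E ^ k)`. -/
def abelPoly (k : K) : ℕ → K[X]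
  | 0 => 1
  | n + 1 => C (((n + 1).factorial : K)⁻¹) * X * (X + C (k * (n + 1))) ^ n

lemma abelPoly_zero (k : K) : abelPoly k 0 = 1 := rfl

lemma eval_abelPoly_succ (k x : K) (n : ℕ) :
    (abelPoly k (n + 1)).eval x = x * (x + k * (n + 1)) ^ n / (n + 1).factorial := by
  simp only [abelPoly, eval_mul, eval_C, eval_X, eval_pow, eval_add]
  ring

lemma eval_zero_abelPoly (k : K) (n : ℕ) :
    (abelPoly k n).eval 0 = if n = 0 then 1 else 0 := by
  cases n <;> simp [abelPoly]

variable [CharZero K]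

lemma derivative_abelPoly_succ (k : K) (n : ℕ) :
    derivative (abelPoly k (n + 1)) = taylor k (abelPoly k n) := by
  cases n with
  | zero => simp [abelPoly]
  | succ n =>
    have factorial_inv :
        ((n + 1).factorial : K)⁻¹ = ((n + 1 + 1).factorial : K)⁻¹ * ((n + 2 : ℕ) : K) := by
      have : ((n + 2 : ℕ) : K) ≠ 0 := Nat.cast_ne_zero.2 (by omega)
      rw [Nat.factorial_succ (n + 1), Nat.cast_mul, mul_inv_rev, mul_assoc, inv_mul_cancel₀ this,
        mul_one]
    simp only [abelPoly, factorial_inv, derivative_mul, derivative_C, derivative_X, derivative_pow,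
      derivative_add, derivative_natCast, derivative_one, taylor_apply, mul_comp, C_comp, X_comp,
      pow_comp, add_comp, natCast_comp, one_comp, C_mul, C_add, map_natCast, C_1]
    push_cast
    ring

lemma sum_abelPoly_mul_eval_abelPoly (k s q : K) (n : ℕ) :
    ∑ x ∈ antidiagonal n, abelPoly k x.1 * C ((abelPoly (k + s) x.2).eval (s * x.1 + q)) =
      taylor q (abelPoly (k + s) n) := by
  induction n generalizing q with
  | zero => simp [abelPoly]
  | succ n ih =>
    rw [Finset.Nat.sum_antidiagonal_succ]
    apply polynomial_eq_of_derivative_eq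
    · have shift (i : ℕ) : s * ((i + 1 : ℕ) : K) + q = s * i + (s + q) := by push_cast; ring
      have ih_shifted := congrArg (taylor k) (ih (s + q))
      simp only [map_sum, taylor_mul, taylor_C, taylor_taylor] at ih_shifted
      rw [taylor_apply q, derivative_comp]
      simp only [abelPoly_zero, derivative_add, derivative_sum, derivative_mul, derivative_C,
        derivative_X, derivative_abelPoly_succ, shift, ih_shifted, ← taylor_apply, taylor_taylor,
        mul_zero, add_zero, zero_add, one_mul]
      congr 2
      ring
    · simp [eval_finsetSum, taylor_eval, eval_zero_abelPoly]

theorem sum_eval_abelPoly_mul_eval_abelPoly (k s p q : K) (n : ℕ) :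
    ∑ x ∈ antidiagonal n,
        (abelPoly k x.1).eval p * (abelPoly (k + s) x.2).eval (s * x.1 + q) =
      (abelPoly (k + s) n).eval (p + q) := by
  simpa [eval_finsetSum, taylor_eval] using
    congrArg (eval p) (sum_abelPoly_mul_eval_abelPoly k s q n)

lemma eval_add_abelPoly (k p q : K) (n : ℕ) :
    (abelPoly k n).eval (p + q) =
      ∑ x ∈ antidiagonal n, (abelPoly k x.1).eval p * (abelPoly k x.2).eval q := by
  simpa using (sum_eval_abelPoly_mul_eval_abelPoly k 0 p q n).symm

lemma eval_one_abelPoly_succ (k : K) (n : ℕ) :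
    (k + 1) * (abelPoly k (n + 1)).eval 1 =
      (k + ((n + 1 : ℕ) : K)⁻¹) * (abelPoly k n).eval (k + 1) := by
  cases n with
  | zero => simp [abelPoly]
  | succ n =>
    have hfactorial : ((n + 1).factorial : K) ≠ 0 := Nat.cast_ne_zero.2 (Nat.factorial_ne_zero _)
    have hsucc : (n : K) + 1 + 1 ≠ 0 := by exact_mod_cast (n + 1).succ_ne_zero
    rw [eval_abelPoly_succ, eval_abelPoly_succ, Nat.factorial_succ (n + 1)]
    push_cast
    field_simp
    ring

end AbelPolynomial

section AbelSeries

variable {K : Type*} [Field K]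

/-- The series `Φ(p, q) = ∑ A_h(p) A'_j(s h + q) y ^ h z ^ (h + j)` in `z`, with coefficients that
are polynomials in `y`, where `A` and `A'` are the Abel polynomials of parameters `k` and
`k + s`. -/
def abelSeries (k s p q : K) : PowerSeries K[X] :=
  PowerSeries.mk fun n => ∑ x ∈ antidiagonal n,
    monomial x.1 ((abelPoly k x.1).eval p * (abelPoly (k + s) x.2).eval (s * x.1 + q))

lemma coeff_coeff_abelSeries (k s p q : K) (h j : ℕ) :
    (PowerSeries.coeff (h + j) (abelSeries k s p q)).coeff h =
      (abelPoly k h).eval p * (abelPoly (k + s) j).eval (s * h + q) := by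
  rw [abelSeries, PowerSeries.coeff_mk, finsetSum_coeff, sum_eq_single_of_mem (h, j) (by simp)]
  · simp
  · rintro ⟨a, b⟩ hab hne
    rw [HasAntidiagonal.mem_antidiagonal] at hab
    exact coeff_monomial_of_ne _ fun hah => hne (Prod.ext hah.symm (by grind))

lemma coeff_coeff_abelSeries_of_lt (k s p q : K) {n h : ℕ} (hnh : n < h) :
    (PowerSeries.coeff n (abelSeries k s p q)).coeff h = 0 := by
  rw [abelSeries, PowerSeries.coeff_mk, finsetSum_coeff]
  refine sum_eq_zero fun x hx => coeff_monomial_of_ne _ ?_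
  have := HasAntidiagonal.mem_antidiagonal.1 hx
  omega

lemma coeff_abelSeries_zero_left (k s q : K) (n : ℕ) :
    PowerSeries.coeff n (abelSeries k s 0 q) = C ((abelPoly (k + s) n).eval q) := by
  rw [abelSeries, PowerSeries.coeff_mk, sum_eq_single_of_mem (0, n) (by simp)]
  · simp [abelPoly_zero]
  · rintro ⟨a, b⟩ hab hne
    rw [HasAntidiagonal.mem_antidiagonal] at hab
    have : a ≠ 0 := fun ha => hne (Prod.ext ha (by grind))
    simp [eval_zero_abelPoly, this]

lemma abelSeries_zero_zero (k s : K) : abelSeries k s 0 0 = 1 := by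
  ext1 n
  rw [coeff_abelSeries_zero_left, eval_zero_abelPoly, PowerSeries.coeff_one]
  split_ifs <;> simp

lemma sum_antidiagonal_prod_comm {A M : Type*} [AddCommMonoid A] [HasAntidiagonal A]
    [AddCommMonoid M] (n : A) (f : A → A → A → A → M) :
    ∑ x ∈ antidiagonal n, ∑ y ∈ antidiagonal x.1, ∑ z ∈ antidiagonal x.2, f y.1 y.2 z.1 z.2 =
      ∑ x ∈ antidiagonal n, ∑ y ∈ antidiagonal x.1, ∑ z ∈ antidiagonal x.2,
        f y.1 z.1 y.2 z.2 := by
  simp only [← sum_product', sum_sigma']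
  let transpose (x : (_ : A × A) × (A × A) × (A × A)) : (_ : A × A) × (A × A) × (A × A) :=
    ⟨(x.2.1.1 + x.2.2.1, x.2.1.2 + x.2.2.2), (x.2.1.1, x.2.2.1), (x.2.1.2, x.2.2.2)⟩
  refine sum_nbij' transpose transpose ?_ ?_ ?_ ?_ (fun _ _ => rfl)
  all_goals
    rintro ⟨⟨a, b⟩, ⟨c, d⟩, ⟨e, g⟩⟩ h
    simp only [mem_sigma, mem_product, HasAntidiagonal.mem_antidiagonal, transpose] at h ⊢
    obtain ⟨rfl, rfl, rfl⟩ := h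
    simp only [add_add_add_comm, and_self]

variable [CharZero K]

theorem abelSeries_mul_abelSeries (k s p q p' q' : K) :
    abelSeries k s p q * abelSeries k s p' q' = abelSeries k s (p + p') (q + q') := by
  let a (h : ℕ) (x : K) : K := (abelPoly k h).eval x
  let b (j : ℕ) (x : K) : K := (abelPoly (k + s) j).eval x
  ext1 n
  calc PowerSeries.coeff n (abelSeries k s p q * abelSeries k s p' q')
    _ = ∑ x ∈ antidiagonal n, ∑ y ∈ antidiagonal x.1, ∑ z ∈ antidiagonal x.2,
          monomial (y.1 + z.1) (a y.1 p * b y.2 (s * y.1 + q) *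
            (a z.1 p' * b z.2 (s * z.1 + q'))) := by
      simp only [PowerSeries.coeff_mul, abelSeries, PowerSeries.coeff_mk, sum_mul_sum,
        monomial_mul_monomial, a, b]
    _ = ∑ x ∈ antidiagonal n, ∑ y ∈ antidiagonal x.1, ∑ z ∈ antidiagonal x.2,
          monomial (y.1 + y.2) (a y.1 p * b z.1 (s * y.1 + q) *
            (a y.2 p' * b z.2 (s * y.2 + q'))) :=
      sum_antidiagonal_prod_comm n fun h j h' j' =>
        monomial (h + h') (a h p * b j (s * h + q) * (a h' p' * b j' (s * h' + q')))
    _ = PowerSeries.coeff n (abelSeries k s (p + p') (q + q')) := by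
      rw [abelSeries, PowerSeries.coeff_mk]
      refine sum_congr rfl fun x _ => ?_
      rw [eval_add_abelPoly k p, sum_mul, map_sum]
      refine sum_congr rfl fun y hy => ?_
      have split_shift : s * (x.1 : K) + (q + q') = (s * y.1 + q) + (s * y.2 + q') := by
        rw [← HasAntidiagonal.mem_antidiagonal.1 hy]; push_cast; ring
      rw [split_shift, eval_add_abelPoly, mul_sum, map_sum, HasAntidiagonal.mem_antidiagonal.1 hy]
      exact sum_congr rfl fun z _ => congrArg _ (mul_mul_mul_comm ..)

lemma abelSeries_pow (k s p q : K) (a : ℕ) :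
    abelSeries k s p q ^ a = abelSeries k s (a * p) (a * q) := by
  induction a with
  | zero => simp [abelSeries_zero_zero]
  | succ a ih =>
    rw [pow_succ, ih, abelSeries_mul_abelSeries]
    congr 1 <;> push_cast <;> ring

lemma eval_one_coeff_abelSeries (k s p q : K) (n : ℕ) :
    (PowerSeries.coeff n (abelSeries k s p q)).eval 1 = (abelPoly (k + s) n).eval (p + q) := by
  rw [← sum_eval_abelPoly_mul_eval_abelPoly, abelSeries, PowerSeries.coeff_mk, eval_finsetSum]
  simp only [eval_monomial, one_pow, mul_one]

lemma map_eval_one_abelSeries (k s p q : K) :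
    PowerSeries.map (C.comp (evalRingHom 1)) (abelSeries k s p q) = abelSeries k s 0 (p + q) := by
  ext1 n
  rw [PowerSeries.coeff_map, coeff_abelSeries_zero_left, RingHom.comp_apply, coe_evalRingHom,
    eval_one_coeff_abelSeries]

lemma coeff_coeff_succ_abelSeries_one_zero (k s : K) (n h : ℕ) :
    (k + 1) * (PowerSeries.coeff (n + 1) (abelSeries k s 1 0)).coeff h =
      (k + (h : K)⁻¹) * (X * PowerSeries.coeff n (abelSeries k s (k + 1) s)).coeff h := by
  cases h with
  | zero =>
    have hcoeff := coeff_coeff_abelSeries k s 1 0 0 (n + 1)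
    rw [zero_add] at hcoeff
    simp [hcoeff, eval_zero_abelPoly]
  | succ h =>
    rw [coeff_X_mul]
    obtain hnh | hhn := Nat.lt_or_ge n h
    · rw [coeff_coeff_abelSeries_of_lt k s 1 0 (by omega), coeff_coeff_abelSeries_of_lt _ _ _ _ hnh,
        mul_zero, mul_zero]
    · obtain ⟨j, rfl⟩ := Nat.exists_eq_add_of_le hhn
      have shift : s * ((h + 1 : ℕ) : K) + 0 = s * h + s := by push_cast; ring
      rw [add_right_comm, coeff_coeff_abelSeries, coeff_coeff_abelSeries, shift, ← mul_assoc,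
        eval_one_abelPoly_succ, mul_assoc]

end AbelSeries

namespace MTree

section Enumeration

variable {r : ℕ}

lemma finite_setOf_internals_le (r n : ℕ) : {T : MTree r | T.internals ≤ n}.Finite := by
  induction n with
  | zero =>
    refine (Set.finite_singleton leaf).subset fun T hT => ?_
    cases T with
    | leaf => rfl
    | node c => simp [internals] at hT
  | succ n ih =>
    refine ((Set.finite_singleton leaf).union
      ((Set.Finite.pi' fun _ : Fin r => ih).image node)).subset fun T hT => ?_
    cases T with
    | leaf => exact Or.inl rfl
    | node c =>
      refine Or.inr ⟨c, fun i => ?_, rfl⟩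
      have hchild := single_le_sum (f := fun i => (c i).internals) (fun _ _ => Nat.zero_le _)
        (mem_univ i)
      simp only [Set.mem_ofPred_eq, internals] at hT hchild ⊢
      omega

lemma finite_setOf_internals_eq (r n : ℕ) : {T : MTree r | T.internals = n}.Finite :=
  (finite_setOf_internals_le r n).subset fun _ => le_of_eq

/-- The finite set `𝒯_{n,r}` of complete `r`-ary trees with `n` internal vertices. -/
def trees (r n : ℕ) : Finset (MTree r) := (finite_setOf_internals_eq r n).toFinset

lemma mem_trees {n : ℕ} {T : MTree r} : T ∈ trees r n ↔ T.internals = n :=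
  Set.Finite.mem_toFinset _

lemma trees_zero (r : ℕ) : trees r 0 = {leaf} := by
  ext T
  cases T <;> simp [mem_trees, internals]

lemma node_injective : Function.Injective (node : (Fin r → MTree r) → MTree r) :=
  fun _ _ => node.inj

/-- The tuples of `r` complete `r`-ary trees with `n` internal vertices in total, i.e. the possible
lists of children of the root of a tree with `n + 1` internal vertices. -/
def forests (r n : ℕ) : Finset (Fin r → MTree r) :=
  (trees r (n + 1)).preimage node node_injective.injOn

lemma mem_forests {n : ℕ} {c : Fin r → MTree r} :
    c ∈ forests r n ↔ ∑ i, (c i).internals = n := by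
  rw [forests, mem_preimage, mem_trees, internals]
  omega

lemma sum_trees_succ {M : Type*} [AddCommMonoid M] (n : ℕ) (g : MTree r → M) :
    ∑ T ∈ trees r (n + 1), g T = ∑ c ∈ forests r n, g (node c) := by
  refine (sum_preimage node _ node_injective.injOn g fun T hT hnode => ?_).symm
  cases T with
  | leaf => simp [mem_trees, internals] at hT
  | node c => exact absurd ⟨c, rfl⟩ hnode

variable {R : Type*} [CommSemiring R]

/-- The generating series `∑ w(T) z ^ n` of complete `r`-ary trees `T` weighted by `w`, where `n` is
the number of internal vertices of `T`. -/
def genSeries (w : MTree r → R) : PowerSeries R :=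
  PowerSeries.mk fun n => ∑ T ∈ trees r n, w T

lemma coeff_genSeries (w : MTree r → R) (n : ℕ) :
    PowerSeries.coeff n (genSeries w) = ∑ T ∈ trees r n, w T :=
  PowerSeries.coeff_mk ..

lemma map_genSeries {R' : Type*} [CommSemiring R'] (φ : R →+* R') (w : MTree r → R) :
    PowerSeries.map φ (genSeries w) = genSeries fun T => φ (w T) := by
  ext1 n
  simp only [PowerSeries.coeff_map, coeff_genSeries, map_sum]

lemma coeff_prod_genSeries (w : Fin r → MTree r → R) (n : ℕ) :
    PowerSeries.coeff n (∏ i, genSeries (w i)) = ∑ c ∈ forests r n, ∏ i, w i (c i) := by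
  classical
  let sizes (c : Fin r → MTree r) : Fin r →₀ ℕ :=
    Finsupp.equivFunOnFinite.symm fun i => (c i).internals
  have sizes_mem : ∀ c ∈ forests r n, sizes c ∈ finsuppAntidiag univ n := fun c hc => by
    simpa [mem_finsuppAntidiag, sizes] using mem_forests.1 hc
  rw [PowerSeries.coeff_prod, ← sum_fiberwise_of_maps_to sizes_mem]
  refine sum_congr rfl fun l hl => ?_
  have fiber : (forests r n).filter (sizes · = l) = Fintype.piFinset fun i => trees r (l i) := by
    ext c
    rw [mem_filter, mem_forests, Fintype.mem_piFinset, Finsupp.ext_iff]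
    simp only [mem_trees, sizes, Finsupp.equivFunOnFinite_symm_apply_apply, and_iff_right_iff_imp]
    intro hc
    simpa only [hc] using (mem_finsuppAntidiag.1 hl).1
  simp only [fiber, coeff_genSeries, prod_univ_sum]

end Enumeration

section HookSeries

variable {m : ℕ} {R : Type*} [CommSemiring R]

/-- The positions of the children that survive in `T^S`; see `MTree.internalsS` for the indexing. -/
abbrev kept (S : Finset (Fin m)) : Finset (Fin (m + 1)) := (S.image Fin.castSucc)ᶜ

lemma card_compl_kept (S : Finset (Fin m)) : #(kept S)ᶜ = #S := by
  rw [compl_compl, card_image_of_injective _ (Fin.castSucc_injective m)]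

lemma card_kept (S : Finset (Fin m)) : #(kept S) = m + 1 - #S := by
  rw [← card_compl_kept S, card_compl, compl_compl, Fintype.card_fin]

/-- The hook product of `T`, marked with `y ^ |T^S|`. -/
def hookMonomial (S : Finset (Fin m)) (f : ℕ → R) (T : MTree (m + 1)) : R[X] :=
  monomial (T.internalsS S) (T.hookProdS S f)

/-- The contribution to `MTree.hookMonomial` of a child `T` at position `i`: at a deleted position
its vertices are not marked. -/
def childMonomial (S : Finset (Fin m)) (f : ℕ → R) (i : Fin (m + 1)) (T : MTree (m + 1)) : R[X] :=
  monomial (if i ∈ kept S then T.internalsS S else 0) (T.hookProdS S f)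

lemma eval_one_hookMonomial (S : Finset (Fin m)) (f : ℕ → R) (T : MTree (m + 1)) :
    (hookMonomial S f T).eval 1 = T.hookProdS S f := by
  rw [hookMonomial, eval_monomial, one_pow, mul_one]

lemma coeff_hookMonomial_node (S : Finset (Fin m)) (f : ℕ → R) (c : Fin (m + 1) → MTree (m + 1))
    (h : ℕ) :
    (hookMonomial S f (node c)).coeff h = f h * (X * ∏ i, childMonomial S f i (c i)).coeff h := by
  have prod_childMonomial : ∏ i, childMonomial S f i (c i) =
      monomial (∑ i ∈ kept S, (c i).internalsS S) (∏ i, (c i).hookProdS S f) := by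
    simp only [childMonomial, ← C_mul_X_pow_eq_monomial, prod_mul_distrib, prod_pow_eq_pow_sum,
      map_prod, sum_ite_mem, univ_inter]
  rw [prod_childMonomial, X_mul_monomial, hookMonomial, hookProdS, internalsS, add_comm 1,
    coeff_monomial, coeff_monomial]
  split_ifs with hh
  · rw [hh]
  · rw [mul_zero]

/-- The series `F(y, z) = ∑ (∏ f(ℍ_v^S)) y ^ |T^S| z ^ |T|` over all complete `(m + 1)`-ary trees
`T`, as a series in `z` with coefficients that are polynomials in `y`. -/
def hookSeries (S : Finset (Fin m)) (f : ℕ → R) : PowerSeries R[X] := genSeries (hookMonomial S f)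

lemma eval_one_coeff_hookSeries (S : Finset (Fin m)) (f : ℕ → R) (n : ℕ) :
    (PowerSeries.coeff n (hookSeries S f)).eval 1 = ∑ T ∈ trees (m + 1) n, T.hookProdS S f := by
  simp only [hookSeries, coeff_genSeries, eval_finsetSum, eval_one_hookMonomial]

lemma coeff_zero_hookSeries (S : Finset (Fin m)) (f : ℕ → R) :
    PowerSeries.coeff 0 (hookSeries S f) = 1 := by
  rw [hookSeries, coeff_genSeries, trees_zero, sum_singleton]
  rfl

lemma genSeries_childMonomial (S : Finset (Fin m)) (f : ℕ → R) (i : Fin (m + 1)) :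
    genSeries (childMonomial S f i) =
      if i ∈ kept S then hookSeries S f
      else PowerSeries.map (C.comp (evalRingHom 1)) (hookSeries S f) := by
  split_ifs with hi
  · exact congrArg genSeries (funext fun T => by rw [childMonomial, if_pos hi, hookMonomial])
  · rw [hookSeries, map_genSeries]
    refine congrArg genSeries (funext fun T => ?_)
    rw [childMonomial, if_neg hi, RingHom.comp_apply, coe_evalRingHom, eval_one_hookMonomial,
      monomial_zero_left]

/-- The series `F(y, z) ^ (m + 1 - s) F(1, z) ^ s`: if `F` enumerates trees, then this enumerates
the possible lists of children of a root, where vertices below deleted positions are unmarked. -/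
def rootSeries (S : Finset (Fin m)) (F : PowerSeries R[X]) : PowerSeries R[X] :=
  F ^ (m + 1 - #S) * PowerSeries.map (C.comp (evalRingHom 1)) F ^ #S

lemma prod_genSeries_childMonomial (S : Finset (Fin m)) (f : ℕ → R) :
    ∏ i, genSeries (childMonomial S f i) = rootSeries S (hookSeries S f) := by
  simp only [genSeries_childMonomial]
  rw [prod_ite, filter_univ_mem, filter_not, filter_univ_mem, ← compl_eq_univ_sdiff, prod_const,
    prod_const, card_kept, card_compl_kept, rootSeries]

theorem coeff_coeff_succ_hookSeries (S : Finset (Fin m)) (f : ℕ → R) (n h : ℕ) :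
    (PowerSeries.coeff (n + 1) (hookSeries S f)).coeff h =
      f h * (X * PowerSeries.coeff n (rootSeries S (hookSeries S f))).coeff h := by
  rw [hookSeries, coeff_genSeries, sum_trees_succ, ← hookSeries, ← prod_genSeries_childMonomial,
    coeff_prod_genSeries]
  simp only [finsetSum_coeff, mul_sum, coeff_hookMonomial_node]

end HookSeries

section Uniqueness

variable {m : ℕ} {R : Type*} [CommRing R]

lemma X_pow_dvd_rootSeries_sub (S : Finset (Fin m)) {F G : PowerSeries R[X]} {n : ℕ}
    (hFG : PowerSeries.X ^ n ∣ F - G) :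
    PowerSeries.X ^ n ∣ rootSeries S F - rootSeries S G := by
  have hmap (φ : R[X] →+* R[X]) :
      PowerSeries.X ^ n ∣ PowerSeries.map φ F - PowerSeries.map φ G := by
    simpa only [map_sub, map_pow, PowerSeries.map_X] using map_dvd (PowerSeries.map φ) hFG
  exact dvd_mul_sub_mul (hFG.trans (sub_dvd_pow_sub_pow ..))
    ((hmap _).trans (sub_dvd_pow_sub_pow ..))

theorem eq_hookSeries_of_recursion (S : Finset (Fin m)) (f : ℕ → R) {F : PowerSeries R[X]}
    (hzero : PowerSeries.coeff 0 F = 1)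
    (hsucc : ∀ n h, (PowerSeries.coeff (n + 1) F).coeff h =
      f h * (X * PowerSeries.coeff n (rootSeries S F)).coeff h) :
    F = hookSeries S f := by
  have agree (n : ℕ) : PowerSeries.X ^ n ∣ F - hookSeries S f := by
    induction n with
    | zero => exact one_dvd _
    | succ n ih =>
      refine PowerSeries.X_pow_dvd_iff.2 fun j hj => ?_
      rw [map_sub, sub_eq_zero]
      cases j with
      | zero => rw [hzero, coeff_zero_hookSeries]
      | succ j =>
        have hroot := PowerSeries.X_pow_dvd_iff.1 (X_pow_dvd_rootSeries_sub S ih) j (by omega)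
        rw [map_sub, sub_eq_zero] at hroot
        ext h
        rw [hsucc, coeff_coeff_succ_hookSeries, hroot]
  ext1 n
  simpa [sub_eq_zero] using PowerSeries.X_pow_dvd_iff.1 (agree (n + 1)) n n.lt_succ_self

end Uniqueness

section Evaluation

variable {m : ℕ} {K : Type*} [Field K] [CharZero K]

lemma rootSeries_rescale_abelSeries (S : Finset (Fin m)) (a k : K) (hk : k + #S = m) :
    rootSeries S (PowerSeries.rescale (C a) (abelSeries k #S 1 0)) =
      PowerSeries.rescale (C a) (abelSeries k #S (k + 1) #S) := by
  have hcard : #S ≤ m + 1 := (card_le_univ S).trans (by simp)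
  have hkept : ((m + 1 - #S : ℕ) : K) = k + 1 := by
    rw [Nat.cast_sub hcard]
    push_cast
    linear_combination -hk
  have map_eval_one := (PowerSeries.rescale_map (C.comp (evalRingHom 1)) (C a)
    (abelSeries k #S 1 0)).symm
  rw [RingHom.comp_apply, coe_evalRingHom, eval_C, map_eval_one_abelSeries, add_zero]
    at map_eval_one
  rw [rootSeries, map_eval_one, ← map_pow, ← map_pow, ← map_mul, abelSeries_pow, abelSeries_pow,
    abelSeries_mul_abelSeries, hkept]
  simp only [mul_zero, mul_one, add_zero, zero_add]

theorem hookSeries_add_inv (S : Finset (Fin m)) (k : K) (hk : k + #S = m) :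
    hookSeries S (fun h => k + (h : K)⁻¹) =
      PowerSeries.rescale (C (k + 1)) (abelSeries k #S 1 0) := by
  refine (eq_hookSeries_of_recursion S _ ?_ fun n h => ?_).symm
  · simp [abelSeries, abelPoly_zero]
  · rw [rootSeries_rescale_abelSeries S _ k hk, PowerSeries.coeff_rescale,
      PowerSeries.coeff_rescale, mul_left_comm, ← C_pow, ← C_pow, coeff_C_mul, coeff_C_mul,
      pow_succ, mul_assoc, coeff_coeff_succ_abelSeries_one_zero, mul_left_comm]

theorem sum_trees_hookProdS (S : Finset (Fin m)) (k : K) (hk : k + #S = m) (n : ℕ) :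
    ∑ T ∈ trees (m + 1) n, T.hookProdS S (fun h => k + (h : K)⁻¹) =
      (k + 1) ^ n * (abelPoly (m : K) n).eval 1 := by
  rw [← eval_one_coeff_hookSeries, hookSeries_add_inv S k hk, PowerSeries.coeff_rescale, eval_mul,
    eval_pow, eval_C, eval_one_coeff_abelSeries, hk, add_zero]

end Evaluation

end MTree

theorem hook_length_second_kind_corollary₂_general {K : Type*} [Field K] [CharZero K] (m n : ℕ)
    (hn : 1 ≤ n) (S : Finset (Fin m)) :
    (∑ᶠ T ∈ {T : MTree (m + 1) | T.internals = n},
        MTree.hookProdS S (fun h => (m : K) - (S.card : K) + ((h : K))⁻¹) T)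
      = ((m : K) - (S.card : K) + 1) ^ n * ((m : K) * n + 1) ^ (n - 1) / (n.factorial : K) := by
  obtain ⟨n, rfl⟩ := Nat.exists_eq_add_of_le' hn
  rw [finsum_mem_eq_finite_toFinset_sum _ (MTree.finite_setOf_internals_eq (m + 1) (n + 1))]
  refine (MTree.sum_trees_hookProdS S ((m : K) - #S) (by ring) (n + 1)).trans ?_
  rw [eval_abelPoly_succ, one_mul, ← mul_div_assoc, Nat.add_sub_cancel, Nat.cast_succ,
    add_comm (1 : K)]

end

/-- **Corollary (x = m-s in Theorem 1.2).**  For `m ≥ 0`, `n ≥ 1` and `S ⊆ [m]`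
with `s = |S|`,
`∑_{T ∈ 𝒯_{n,m+1}} ∏_{v ∈ 𝓘(T)} (m - s + 1/ℍ_v^S)
  = (m-s+1)^n (mn+1)^{n-1} / n!`. -/
theorem hook_length_second_kind_corollary₂ (m n : ℕ) (hn : 1 ≤ n)
    (S : Finset (Fin m)) :
    (∑ᶠ T ∈ {T : MTree (m + 1) | T.internals = n},
        MTree.hookProdS S (fun h =>
          (m : ℚ) - (S.card : ℚ) + ((h : ℚ))⁻¹) T)
      = ((m : ℚ) - (S.card : ℚ) + 1) ^ n * ((m : ℚ) * n + 1) ^ (n - 1) /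
          (n.factorial : ℚ) := by
  exact hook_length_second_kind_corollary₂_general m n hn S
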